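/- Let f : [a,b] → ℝ be an absolutely continuous mapping whose derivative f′ belongs to L₂[a,b]. Then for all x ∈ [a,b], |f(x) − ((f(b) − f(a))/(b−a))(x − (a+b)/2) − (1/(b−a)) ∫_a^b f(t) dt| ≤ ((b−a)/(2√3)) · ((1/(b−a)) ‖f′‖₂² − ((f(b) − f(a))/(b−a))²)^{1/2}. -/

import Mathlib

open MeasureTheory Set intervalIntegral

open ProbabilityTheory

/-! With respect to the uniform probability measure on `[a, b]`, the quantity to be estimated is the
covariance of `f'` and the Peano kernel `p x` of the Montgomery identity
`∫ t in a..b, p x t * f' t = (b - a) * f x - ∫ t in a..b, f t`. The bound is the Cauchy–Schwarz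
inequality for this covariance: `p x` is uniformly distributed on `(x - b, x - a]`, so its variance
is `(b - a) ^ 2 / 12` whatever `x` is. -/

theorem sq_covariance_le_variance_mul_variance {Ω : Type*} {mΩ : MeasurableSpace Ω}
    {μ : Measure Ω} [IsFiniteMeasure μ] {X Y : Ω → ℝ} (hX : MemLp X 2 μ) (hY : MemLp Y 2 μ) :
    cov[X, Y; μ] ^ 2 ≤ Var[X; μ] * Var[Y; μ] := by
  have variance_line_nonneg (c : ℝ) :
      0 ≤ Var[X; μ] * (c * c) + 2 * cov[X, Y; μ] * c + Var[Y; μ] := by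
    calc 0 ≤ Var[c • X + Y; μ] := variance_nonneg _ _
      _ = _ := by
        rw [variance_add (hX.const_smul c) hY, variance_smul, covariance_smul_left]
        ring
  have := discrim_le_zero variance_line_nonneg
  rw [discrim] at this
  linarith

theorem integral_ite_le {E : Type*} [NormedAddCommGroup E] [NormedSpace ℝ E] {a b x : ℝ}
    {μ : Measure ℝ} {g h : ℝ → E} (hx : x ∈ Icc a b) (hg : IntervalIntegrable g μ a x)
    (hh : IntervalIntegrable h μ x b) :
    ∫ t in a..b, (if t ≤ x then g t else h t) ∂μ = (∫ t in a..x, g t ∂μ) + ∫ t in x..b, h t ∂μ := by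
  have eq_left : EqOn g (fun t ↦ if t ≤ x then g t else h t) (uIoc a x) := fun t ht ↦
    (if_pos (uIoc_of_le hx.1 ▸ ht).2).symm
  have eq_right : EqOn h (fun t ↦ if t ≤ x then g t else h t) (uIoc x b) := fun t ht ↦
    (if_neg (uIoc_of_le hx.2 ▸ ht).1.not_ge).symm
  rw [← integral_add_adjacent_intervals (hg.congr eq_left) (hh.congr eq_right),
    integral_congr_ae (ae_of_all _ eq_left), integral_congr_ae (ae_of_all _ eq_right)]

section UniformMeasure

variable {a b : ℝ} {g : ℝ → ℝ}

theorem isProbabilityMeasure_cond_Ioc (hab : a < b) :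
    IsProbabilityMeasure (volume[|Ioc a b]) :=
  cond_isProbabilityMeasure_of_finite (by simp [hab]) (by simp)

theorem integral_cond_Ioc {E : Type*} [NormedAddCommGroup E] [NormedSpace ℝ E] (hab : a ≤ b)
    (g : ℝ → E) : ∫ t, g t ∂volume[|Ioc a b] = ⨍ t in a..b, g t := by
  rw [uIoc_of_le hab, average_eq', Measure.restrict_apply_univ, ProbabilityTheory.cond]

theorem memLp_two_cond_Ioc (hab : a < b) (hg : IntervalIntegrable g volume a b)
    (hg2 : IntervalIntegrable (fun t ↦ g t ^ 2) volume a b) : MemLp g 2 (volume[|Ioc a b]) := by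
  rw [intervalIntegrable_iff_integrableOn_Ioc_of_le hab.le] at hg hg2
  exact ((memLp_two_iff_integrable_sq hg.aestronglyMeasurable).2 hg2).smul_measure
    (by simp [hab])

theorem variance_cond_Ioc (hab : a < b) (hg : MemLp g 2 (volume[|Ioc a b])) :
    Var[g; volume[|Ioc a b]] =
      (∫ t in a..b, g t ^ 2) / (b - a) - ((∫ t in a..b, g t) / (b - a)) ^ 2 := by
  have := isProbabilityMeasure_cond_Ioc hab
  rw [variance_eq_sub hg]
  simp only [integral_cond_Ioc hab.le, interval_average_eq_div, Pi.pow_apply]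

end UniformMeasure

/-- The Peano kernel `p x t` of the Montgomery identity on `[a, b]`, which represents
`(b - a) * f x - ∫ t in a..b, f t` as an integral against the derivative of `f`. The value at the
jump `t = x` is chosen arbitrarily to be the left limit. -/
noncomputable def peanoKernel (a b x t : ℝ) : ℝ :=
  if t ≤ x then t - a else t - b

section PeanoKernel

variable {a b x : ℝ}

theorem measurable_peanoKernel (a b x : ℝ) : Measurable (peanoKernel a b x) :=
  Measurable.ite measurableSet_Iic (by fun_prop) (by fun_prop)

theorem abs_peanoKernel_le {t : ℝ} (ht : t ∈ Ioc a b) : |peanoKernel a b x t| ≤ b - a := by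
  obtain ⟨hat, htb⟩ := ht
  rw [peanoKernel, abs_le]
  split_ifs <;> constructor <;> linarith

theorem memLp_peanoKernel (a b x : ℝ) (p : ENNReal) :
    MemLp (peanoKernel a b x) p (volume[|Ioc a b]) :=
  .of_bound (measurable_peanoKernel a b x).aestronglyMeasurable (b - a) <|
    (ae_cond_mem measurableSet_Ioc).mono fun _ ht ↦ abs_peanoKernel_le ht

theorem integral_peanoKernel (hx : x ∈ Icc a b) :
    ∫ t in a..b, peanoKernel a b x t = (b - a) * (x - (a + b) / 2) := by
  simp only [peanoKernel]
  rw [integral_ite_le hx (Continuous.intervalIntegrable (by fun_prop) _ _)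
    (Continuous.intervalIntegrable (by fun_prop) _ _)]
  simp only [integral_comp_sub_right (fun t : ℝ ↦ t), integral_id]
  ring

theorem integral_peanoKernel_sq (hx : x ∈ Icc a b) :
    ∫ t in a..b, peanoKernel a b x t ^ 2 = ((x - a) ^ 3 + (b - x) ^ 3) / 3 := by
  simp only [peanoKernel, ite_pow]
  rw [integral_ite_le hx (Continuous.intervalIntegrable (by fun_prop) _ _)
    (Continuous.intervalIntegrable (by fun_prop) _ _)]
  simp only [integral_comp_sub_right (fun t : ℝ ↦ t ^ 2), integral_pow]
  norm_num
  ring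

theorem variance_peanoKernel (hab : a < b) (hx : x ∈ Icc a b) :
    Var[peanoKernel a b x; volume[|Ioc a b]] = (b - a) ^ 2 / 12 := by
  rw [variance_cond_Ioc hab (memLp_peanoKernel a b x 2), integral_peanoKernel hx,
    integral_peanoKernel_sq hx]
  have : b - a ≠ 0 := (sub_pos.2 hab).ne'
  field_simp
  ring

end PeanoKernel

section AbsolutelyContinuous

variable {a b x : ℝ} {f : ℝ → ℝ}

theorem integral_sub_const_mul_deriv (hf : AbsolutelyContinuousOnInterval f a b) (c : ℝ) :
    ∫ t in a..b, (t - c) * deriv f t = (b - c) * f b - (a - c) * f a - ∫ t in a..b, f t := by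
  have hsub : AbsolutelyContinuousOnInterval (fun t ↦ t - c) a b :=
    (contDiff_id.sub contDiff_const).contDiffOn.absolutelyContinuousOnInterval
  simpa using hsub.integral_mul_deriv_eq_deriv_mul hf

theorem integral_peanoKernel_mul_deriv (hf : AbsolutelyContinuousOnInterval f a b)
    (hx : x ∈ Icc a b) :
    ∫ t in a..b, peanoKernel a b x t * deriv f t = (b - a) * f x - ∫ t in a..b, f t := by
  have hx' : x ∈ uIcc a b := Icc_subset_uIcc hx
  have hf_left := hf.mono (uIcc_subset_uIcc_left hx')
  have hf_right := hf.mono (uIcc_subset_uIcc_right hx')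
  simp only [peanoKernel, ite_mul]
  rw [integral_ite_le hx (hf_left.intervalIntegrable_deriv.continuousOn_mul (by fun_prop))
      (hf_right.intervalIntegrable_deriv.continuousOn_mul (by fun_prop)),
    integral_sub_const_mul_deriv hf_left, integral_sub_const_mul_deriv hf_right,
    ← integral_add_adjacent_intervals hf_left.continuousOn.intervalIntegrable
      hf_right.continuousOn.intervalIntegrable]
  ring

theorem covariance_peanoKernel_deriv (hab : a < b) (hf : AbsolutelyContinuousOnInterval f a b)
    (hf2 : MemLp (deriv f) 2 (volume[|Ioc a b])) (hx : x ∈ Icc a b) :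
    cov[peanoKernel a b x, deriv f; volume[|Ioc a b]] =
      f x - (f b - f a) / (b - a) * (x - (a + b) / 2) - 1 / (b - a) * ∫ t in a..b, f t := by
  have := isProbabilityMeasure_cond_Ioc hab
  rw [covariance_eq_sub (memLp_peanoKernel a b x 2) hf2]
  simp only [Pi.mul_apply, integral_cond_Ioc hab.le, interval_average_eq_div]
  rw [integral_peanoKernel_mul_deriv hf hx, integral_peanoKernel hx, hf.integral_deriv_eq_sub]
  have : b - a ≠ 0 := (sub_pos.2 hab).ne'
  field_simp
  ring

theorem abs_sub_sub_integral_le_sqrt_variance_deriv (hab : a < b)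
    (hf : AbsolutelyContinuousOnInterval f a b)
    (hf2 : MemLp (deriv f) 2 (volume[|Ioc a b])) (hx : x ∈ Icc a b) :
    |f x - (f b - f a) / (b - a) * (x - (a + b) / 2) - 1 / (b - a) * ∫ t in a..b, f t| ≤
      (b - a) / (2 * √3) * √Var[deriv f; volume[|Ioc a b]] := by
  have := isProbabilityMeasure_cond_Ioc hab
  have sqrt_variance : √((b - a) ^ 2 / 12) = (b - a) / (2 * √3) := by
    rw [Real.sqrt_div (sq_nonneg _), Real.sqrt_sq (sub_nonneg.2 hab.le),
      show (12 : ℝ) = 2 ^ 2 * 3 by norm_num, Real.sqrt_mul (by norm_num),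
      Real.sqrt_sq (by norm_num)]
  rw [← covariance_peanoKernel_deriv hab hf hf2 hx, ← sqrt_variance,
    ← Real.sqrt_mul (by positivity), ← variance_peanoKernel hab hx]
  exact Real.abs_le_sqrt (sq_covariance_le_variance_mul_variance (memLp_peanoKernel a b x 2) hf2)

end AbsolutelyContinuous

section Primitive

variable {a b : ℝ} {g : ℝ → ℝ}

theorem absolutelyContinuousOnInterval_const_add_integral (hg : IntervalIntegrable g volume a b)
    (c : ℝ) : AbsolutelyContinuousOnInterval (fun x ↦ c + ∫ t in a..x, g t) a b :=
  contDiff_const.contDiffOn.absolutelyContinuousOnInterval.fun_add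
    (hg.absolutelyContinuousOnInterval_intervalIntegral left_mem_uIcc)

theorem deriv_const_add_integral_ae_eq (hab : a ≤ b) (hg : IntervalIntegrable g volume a b)
    (c : ℝ) : deriv (fun x ↦ c + ∫ t in a..x, g t) =ᵐ[volume.restrict (Ioc a b)] g := by
  rw [Filter.EventuallyEq, ae_restrict_iff' measurableSet_Ioc]
  filter_upwards [hg.ae_hasDerivAt_integral] with x hx hxab
  exact ((hx (uIcc_of_le hab ▸ Ioc_subset_Icc_self hxab) a left_mem_uIcc).const_add c).deriv

end Primitive

/-- **Barnett–Dragomir et al.** If `f` is absolutely continuous on `[a,b]`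
(i.e. the integral of its derivative `f'`) with `f' ∈ L₂[a,b]`, then for all `x ∈ [a,b]`,
`|f(x) − ((f(b)−f(a))/(b−a))(x − (a+b)/2) − (1/(b−a))∫_a^b f|
  ≤ ((b−a)/(2√3)) ((1/(b−a))‖f'‖₂² − ((f(b)−f(a))/(b−a))²)^{1/2}`. -/
theorem barnett_dragomir_L2 (a b : ℝ) (hab : a < b) (f f' : ℝ → ℝ)
    (hf : ∀ x ∈ Icc a b, f x = f a + ∫ t in a..x, f' t)
    (hint : IntervalIntegrable f' volume a b)
    (hL2 : IntervalIntegrable (fun t => (f' t) ^ 2) volume a b) :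
    ∀ x ∈ Icc a b,
      |f x - ((f b - f a) / (b - a)) * (x - (a + b) / 2) -
          (1 / (b - a)) * ∫ t in a..b, f t| ≤
        ((b - a) / (2 * Real.sqrt 3)) *
          Real.sqrt ((1 / (b - a)) * (∫ t in a..b, (f' t) ^ 2) -
            ((f b - f a) / (b - a)) ^ 2) := by
  intro x hx
  let F : ℝ → ℝ := fun t ↦ f a + ∫ s in a..t, f' s
  have hF : AbsolutelyContinuousOnInterval F a b :=
    absolutelyContinuousOnInterval_const_add_integral hint (f a)
  have hF' : deriv F =ᵐ[volume[|Ioc a b]] f' :=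
    Measure.ae_smul_measure (deriv_const_add_integral_ae_eq hab.le hint (f a)) _
  have memLp_f' : MemLp f' 2 (volume[|Ioc a b]) := memLp_two_cond_Ioc hab hint hL2
  have hfF : EqOn f F (uIcc a b) := uIcc_of_le hab.le ▸ hf
  have integral_f' : ∫ t in a..b, f' t = f b - f a :=
    eq_sub_of_add_eq' (hf b (right_mem_Icc.2 hab.le)).symm
  have variance_F' : Var[deriv F; volume[|Ioc a b]] =
      1 / (b - a) * (∫ t in a..b, f' t ^ 2) - ((f b - f a) / (b - a)) ^ 2 := by
    rw [variance_congr hF', variance_cond_Ioc hab memLp_f', integral_f', one_div_mul_eq_div]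
  rw [← variance_F', integral_congr hfF, hfF (Icc_subset_uIcc hx), hfF left_mem_uIcc,
    hfF right_mem_uIcc]
  exact abs_sub_sub_integral_le_sqrt_variance_deriv hab hF ((memLp_congr_ae hF').2 memLp_f') hx
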